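/- arXiv:1812.10789 — 4 statements merged into one kernel-verified Lean document; each statement's English description precedes it below -/
import Mathlib

section
/- Let (X,f) be a dynamical system on a compact metric space (X,d) with f continuous. If (X,f) is mean equicontinuous, then it has finite separation numbers, i.e. Sep(f,δ,ν) < ∞ for all δ > 0 and ν ∈ (0,1]. -/
open Filter Topology Set MeasureTheory
open scoped ENNReal

noncomputable section

/-- The upper density of a set of natural numbers. -/
def upperDensity (E : Set ℕ) : ℝ :=
  Filter.limsup (fun n : ℕ =>
    (∑ k ∈ Finset.range n, E.indicator (fun _ => (1 : ℝ)) k) / n) Filter.atTop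

/-- `S` is an `(f,δ,ν)`-separated subset of `X`, with respect to the distance `ρ`. -/
def IsSepSet {α : Type*} (ρ : α → α → ℝ) (f : α → α) (X : Set α) (δ ν : ℝ) (S : Set α) : Prop :=
  S ⊆ X ∧ ∀ x ∈ S, ∀ y ∈ S, x ≠ y → ν ≤ upperDensity {k : ℕ | δ ≤ ρ (f^[k] x) (f^[k] y)}

/-- The asymptotic separation number `Sep(f,δ,ν)` of `f` on `X`. -/
def sepNum {α : Type*} (ρ : α → α → ℝ) (f : α → α) (X : Set α) (δ ν : ℝ) : ℕ∞ :=
  ⨆ (S : Set α) (_ : IsSepSet ρ f X δ ν S), S.encard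

/-- The quantity `log s / (- log ν)`, with value `∞` if `s = ∞`. -/
def logRatio (s : ℕ∞) (ν : ℝ) : ℝ≥0∞ :=
  if s = ⊤ then ⊤ else ENNReal.ofReal (Real.log (s.toNat : ℝ) / (- Real.log ν))

/-- The lower amorphic complexity of `f` on `X`. -/
def acLower {α : Type*} (ρ : α → α → ℝ) (f : α → α) (X : Set α) : ℝ≥0∞ :=
  ⨆ (δ : ℝ) (_ : 0 < δ),
    Filter.liminf (fun ν : ℝ => logRatio (sepNum ρ f X δ ν) ν) (𝓝[>] (0 : ℝ))

/-- The upper amorphic complexity of `f` on `X`. -/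
def acUpper {α : Type*} (ρ : α → α → ℝ) (f : α → α) (X : Set α) : ℝ≥0∞ :=
  ⨆ (δ : ℝ) (_ : 0 < δ),
    Filter.limsup (fun ν : ℝ => logRatio (sepNum ρ f X δ ν) ν) (𝓝[>] (0 : ℝ))

/-- The left shift on `A^ℤ`. -/
def shift {A : Type*} (x : ℤ → A) : ℤ → A := fun n => x (n + 1)

open scoped Classical in
/-- The Cantor metric `d(x,y) = 2^{-min{|k| : x_k ≠ y_k}}` on `A^ℤ`. -/
def cantorDist {A : Type*} (x y : ℤ → A) : ℝ :=
  if x = y then 0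
  else (2 : ℝ) ^ (-((sInf {n : ℕ | ∃ k : ℤ, k.natAbs = n ∧ x k ≠ y k} : ℕ) : ℤ))

/-- The Besicovitch pseudometric `D_1` on `A^ℤ`. -/
def besD1 {A : Type*} (x y : ℤ → A) : ℝ :=
  upperDensity {k : ℕ | x (k : ℤ) ≠ y (k : ℤ)}

/-- The Besicovitch pseudometric `D_B` associated to a map `f` and a distance `ρ`. -/
def besDB {α : Type*} (ρ : α → α → ℝ) (f : α → α) (x y : α) : ℝ :=
  Filter.limsup (fun n : ℕ => (∑ k ∈ Finset.range n, ρ (f^[k] x) (f^[k] y)) / n) Filter.atTop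

/-- The pseudometric `D_δ` on `A^ℤ` associated to a metric `ρ` on `A^ℤ`. -/
def Ddelta {A : Type*} (ρ : (ℤ → A) → (ℤ → A) → ℝ) (δ : ℝ) (x y : ℤ → A) : ℝ :=
  upperDensity {k : ℕ | δ ≤ ρ (shift^[k] x) (shift^[k] y)}

/-- The closure of the two-sided shift orbit of `x₀`. -/
def orbitClosure {A : Type*} [TopologicalSpace A] (x₀ : ℤ → A) : Set (ℤ → A) :=
  closure {y | ∃ k : ℤ, y = fun n => x₀ (n + k)}

/-- The extension of a constant length substitution `θ : A → A^ℓ` to `A^ℤ`,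
via `θ(x)_{ℓk+i} = θ(x_k)_i`. -/
def substApply {A : Type*} {ℓ : ℕ} (hℓ : 0 < ℓ) (θ : A → Fin ℓ → A)
    (x : ℤ → A) : ℤ → A := fun n =>
  θ (x (n / (ℓ : ℤ))) ⟨(n % (ℓ : ℤ)).toNat, by
    have h1 : 0 ≤ n % (ℓ : ℤ) := Int.emod_nonneg n (by exact_mod_cast hℓ.ne')
    have h2 : n % (ℓ : ℤ) < (ℓ : ℤ) := Int.emod_lt_of_pos n (by exact_mod_cast hℓ)
    omega⟩

/-- A constant length substitution is primitive if some power `θ^m` of it is such that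
every letter `b` occurs in every word `θ^m(a)`. -/
def IsPrimitive {A : Type*} {ℓ : ℕ} (hℓ : 0 < ℓ) (θ : A → Fin ℓ → A) : Prop :=
  ∃ m : ℕ, 1 ≤ m ∧ ∀ a b : A, ∃ j : ℤ, 0 ≤ j ∧ j < (ℓ : ℤ) ^ m ∧
    (substApply hℓ θ)^[m] (fun _ => a) j = b

open scoped Classical in
/-- The number of positions at which the words `θ(a)` and `θ(b)` agree. -/
def coincCount {A : Type*} {ℓ : ℕ} (θ : A → Fin ℓ → A) (a b : A) : ℕ :=
  (Finset.univ.filter (fun j : Fin ℓ => θ a j = θ b j)).card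

/-- `c(θ)`, the minimum of `coincCount θ a b` over pairs `a ≠ b`. -/
def cMin {A : Type*} {ℓ : ℕ} (θ : A → Fin ℓ → A) : ℕ :=
  sInf {n : ℕ | ∃ a b : A, a ≠ b ∧ coincCount θ a b = n}

/-- `C(θ)`, the maximum of `coincCount θ a b` over pairs `a ≠ b`. -/
def cMax {A : Type*} {ℓ : ℕ} (θ : A → Fin ℓ → A) : ℕ :=
  sSup {n : ℕ | ∃ a b : A, a ≠ b ∧ coincCount θ a b = n}

/-- `S` is `ε`-separated with respect to the distance `ρ`. -/
def IsEpsSeparated {α : Type*} (ρ : α → α → ℝ) (ε : ℝ) (S : Set α) : Prop :=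
  ∀ x ∈ S, ∀ y ∈ S, x ≠ y → ε ≤ ρ x y

/-- `M_ε(E)`: the maximal cardinality of an `ε`-separated subset of `E`. -/
def packNum {α : Type*} (ρ : α → α → ℝ) (ε : ℝ) (E : Set α) : ℕ∞ :=
  ⨆ (S : Set α) (_ : S ⊆ E ∧ IsEpsSeparated ρ ε S), S.encard

/-- The lower box dimension of `E` with respect to the distance `ρ`. -/
def lowerBoxDim {α : Type*} (ρ : α → α → ℝ) (E : Set α) : ℝ≥0∞ :=
  Filter.liminf (fun ε : ℝ => logRatio (packNum ρ ε E) ε) (𝓝[>] (0 : ℝ))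

/-- The upper box dimension of `E` with respect to the distance `ρ`. -/
def upperBoxDim {α : Type*} (ρ : α → α → ℝ) (E : Set α) : ℝ≥0∞ :=
  Filter.limsup (fun ε : ℝ => logRatio (packNum ρ ε E) ε) (𝓝[>] (0 : ℝ))

/-- Mean equicontinuity of `f` on `X` with respect to the distance `ρ`. -/
def MeanEquicontinuousOn {α : Type*} (ρ : α → α → ℝ) (f : α → α) (X : Set α) : Prop :=
  ∀ ν : ℝ, 0 < ν → ∃ δ : ℝ, 0 < δ ∧ ∀ x ∈ X, ∀ y ∈ X, ρ x y < δ → besDB ρ f x y < ν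

/-- The subshift `X` has discrete spectrum: for every shift-invariant Borel probability
measure giving `X` full measure (there is exactly one for the systems under consideration),
`L²` has a Hilbert basis of eigenfunctions of the shift. -/
def HasDiscreteSpectrum {A : Type*} [MeasurableSpace A] (X : Set (ℤ → A)) : Prop :=
  ∀ μ : Measure (ℤ → A), IsProbabilityMeasure μ → MeasurePreserving shift μ μ → μ X = 1 →
    ∃ (ι : Type) (b : HilbertBasis ι ℂ (Lp ℂ 2 μ)), ∀ i : ι, ∃ c : ℂ,
      (fun z => (b i : Lp ℂ 2 μ) (shift z)) =ᵐ[μ] (fun z => c * (b i : Lp ℂ 2 μ) z)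

end

/-!
By Markov's inequality for the averages of `k ↦ d(f^k x, f^k y)`, the times at which two orbits are
at distance at least `δ` have upper density at most `D_B(x, y) / δ`. Mean equicontinuity supplies
`η > 0` such that `d(x, y) < η` forces `D_B(x, y) < δν`, so the points of an `(f, δ, ν)`-separated
set lie at mutual distance at least `η`. Total boundedness limits the number of such points.
-/

open scoped NNReal

section Averages

variable {u : ℕ → ℝ}

theorem isBoundedUnder_le_average {b : ℝ} (hu : ∀ k, u k ≤ b) :
    IsBoundedUnder (· ≤ ·) atTop (fun n : ℕ ↦ (∑ k ∈ Finset.range n, u k) / n) := by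
  refine isBoundedUnder_of_eventually_le (a := b) ?_
  filter_upwards [eventually_gt_atTop 0] with n hn
  rw [div_le_iff₀' (Nat.cast_pos.2 hn)]
  simpa using Finset.sum_le_card_nsmul (Finset.range n) u b fun k _ ↦ hu k

theorem isCoboundedUnder_le_average (hu : ∀ k, 0 ≤ u k) :
    IsCoboundedUnder (· ≤ ·) atTop (fun n : ℕ ↦ (∑ k ∈ Finset.range n, u k) / n) :=
  (isBoundedUnder_of ⟨0, fun n ↦ div_nonneg (Finset.sum_nonneg fun k _ ↦ hu k)
    n.cast_nonneg⟩).isCoboundedUnder_le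

theorem mul_average_indicator_le_average (hu : ∀ k, 0 ≤ u k) (δ : ℝ) (n : ℕ) :
    δ * ((∑ k ∈ Finset.range n, {k | δ ≤ u k}.indicator (fun _ ↦ (1 : ℝ)) k) / n) ≤
      (∑ k ∈ Finset.range n, u k) / n := by
  rw [← mul_div_assoc, Finset.mul_sum]
  gcongr with k
  by_cases hk : δ ≤ u k <;> simp [hk, hu k]

theorem mul_upperDensity_le_limsup_average (hu : ∀ k, 0 ≤ u k)
    (hbdd : IsBoundedUnder (· ≤ ·) atTop fun n : ℕ ↦ (∑ k ∈ Finset.range n, u k) / n)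
    {δ : ℝ} (hδ : 0 ≤ δ) :
    δ * upperDensity {k | δ ≤ u k} ≤
      limsup (fun n : ℕ ↦ (∑ k ∈ Finset.range n, u k) / n) atTop := by
  set χ : ℕ → ℝ := {k | δ ≤ u k}.indicator fun _ ↦ 1
  have hχ_nonneg : ∀ k, 0 ≤ χ k := indicator_nonneg fun _ _ ↦ zero_le_one
  have hχ_le_one : ∀ k, χ k ≤ 1 := indicator_le_self' fun _ _ ↦ zero_le_one
  calc δ * upperDensity {k | δ ≤ u k}
      = limsup (fun n : ℕ ↦ δ * ((∑ k ∈ Finset.range n, χ k) / n)) atTop :=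
        (monotone_mul_left_of_nonneg hδ).map_limsup_of_continuousAt _
          (continuous_const_mul δ).continuousAt (isBoundedUnder_le_average hχ_le_one)
          (isCoboundedUnder_le_average hχ_nonneg)
    _ ≤ limsup (fun n : ℕ ↦ (∑ k ∈ Finset.range n, u k) / n) atTop :=
        limsup_le_limsup (.of_forall (mul_average_indicator_le_average hu δ)) (by
          simpa only [Finset.mul_sum, ← mul_div_assoc] using isCoboundedUnder_le_average
            fun k ↦ mul_nonneg hδ (hχ_nonneg k)) hbdd

end Averages

section Packing

theorem packingNumber_ne_top_of_totallyBounded {X : Type*} [PseudoEMetricSpace X] {A : Set X}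
    (hA : TotallyBounded A) {ε : ℝ≥0} (hε : ε ≠ 0) : Metric.packingNumber ε A ≠ ⊤ := by
  obtain ⟨C, -, hC_finite, hC_cover⟩ :=
    Metric.exists_finite_isCover_of_totallyBounded (half_pos (pos_iff_ne_zero.2 hε)).ne' hA
  have hC_encard : Metric.packingNumber ε A ≤ C.encard := calc
    Metric.packingNumber ε A = Metric.packingNumber (2 * (ε / 2)) A := by
      rw [mul_div_cancel₀ ε two_ne_zero]
    _ ≤ Metric.externalCoveringNumber (ε / 2) A :=
      Metric.packingNumber_two_mul_le_externalCoveringNumber _ A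
    _ ≤ C.encard := hC_cover.externalCoveringNumber_le_encard
  exact ne_top_of_le_ne_top hC_finite.encard_lt_top.ne hC_encard

variable {X : Type*} [PseudoMetricSpace X] {A : Set X} {η : ℝ}

theorem packNum_dist_le_packingNumber {ε : ℝ≥0} (hε : ε < η) :
    packNum dist η A ≤ Metric.packingNumber ε A := by
  refine iSup₂_le fun S hS ↦ Metric.IsSeparated.encard_le_packingNumber hS.1 ?_
  intro x hx y hy hxy
  rw [edist_nndist, ENNReal.coe_lt_coe, ← NNReal.coe_lt_coe, coe_nndist]
  exact hε.trans_le (hS.2 x hx y hy hxy)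

theorem packNum_dist_ne_top_of_totallyBounded (hA : TotallyBounded A) (hη : 0 < η) :
    packNum dist η A ≠ ⊤ := by
  obtain ⟨ε, hε_pos, hε_lt⟩ := exists_between hη
  lift ε to ℝ≥0 using hε_pos.le
  exact ne_top_of_le_ne_top
    (packingNumber_ne_top_of_totallyBounded hA (NNReal.coe_pos.1 hε_pos).ne')
    (packNum_dist_le_packingNumber hε_lt)

end Packing

section Separation

variable {X : Type*} [PseudoMetricSpace X] {A : Set X} {f : X → X} {δ ν η : ℝ}

theorem mul_upperDensity_le_besDB (hA : Bornology.IsBounded A) (hf : MapsTo f A A)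
    {x y : X} (hx : x ∈ A) (hy : y ∈ A) (hδ : 0 ≤ δ) :
    δ * upperDensity {k : ℕ | δ ≤ dist (f^[k] x) (f^[k] y)} ≤ besDB dist f x y :=
  mul_upperDensity_le_limsup_average (fun _ ↦ dist_nonneg)
    (isBoundedUnder_le_average fun k ↦
      Metric.dist_le_diam_of_mem hA (hf.iterate k hx) (hf.iterate k hy)) hδ

theorem sepNum_le_packNum (hA : Bornology.IsBounded A) (hf : MapsTo f A A) (hδ : 0 ≤ δ)
    (hη : ∀ x ∈ A, ∀ y ∈ A, dist x y < η → besDB dist f x y < δ * ν) :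
    sepNum dist f A δ ν ≤ packNum dist η A := by
  refine iSup₂_le fun S ⟨hSA, hS⟩ ↦ le_iSup₂_of_le S ⟨hSA, fun x hx y hy hxy ↦ ?_⟩ le_rfl
  by_contra! h_dist
  exact (calc δ * ν
      ≤ δ * upperDensity {k : ℕ | δ ≤ dist (f^[k] x) (f^[k] y)} := by gcongr; exact hS x hx y hy hxy
    _ ≤ besDB dist f x y := mul_upperDensity_le_besDB hA hf (hSA hx) (hSA hy) hδ
    _ < δ * ν := hη x (hSA hx) y (hSA hy) h_dist).false

theorem mean_equicontinuous_finite_separation_numbers_general (hA : TotallyBounded A)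
    (hf : MapsTo f A A) (hME : MeanEquicontinuousOn dist f A) (hδ : 0 < δ) (hν : 0 < ν) :
    sepNum dist f A δ ν ≠ ⊤ := by
  obtain ⟨η, hη, h_besDB⟩ := hME (δ * ν) (mul_pos hδ hν)
  exact ne_top_of_le_ne_top (packNum_dist_ne_top_of_totallyBounded hA hη)
    (sepNum_le_packNum hA.isBounded hf hδ.le h_besDB)

end Separation

/-- A mean equicontinuous dynamical system on a compact metric space
has finite separation numbers. -/
theorem mean_equicontinuous_finite_separation_numbers
    {X : Type*} [MetricSpace X] [CompactSpace X] (f : X → X) (hf : Continuous f)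
    (hME : MeanEquicontinuousOn dist f Set.univ) :
    ∀ δ : ℝ, 0 < δ → ∀ ν : ℝ, 0 < ν → ν ≤ 1 → sepNum dist f Set.univ δ ν ≠ ⊤ := fun _ hδ _ hν _ ↦
  mean_equicontinuous_finite_separation_numbers_general isCompact_univ.totallyBounded
    (mapsTo_univ f univ) hME hδ hν
end

section
/- Let (X,f) be a minimal dynamical system on a compact metric space (X,d) with f continuous. Then (X,f) is mean equicontinuous if and only if (X,f) has finite separation numbers. -/
open Filter Topology Set MeasureTheory
open scoped ENNReal

/-!
By Markov's inequality `D_B` and the upper density of the `δ`-separation times control each other.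
Mean equicontinuity therefore makes nearby points non-separated, and a finite cover by small balls
bounds every separated set. Conversely, a maximal separated set is a finite net for `D_B`, so by
Baire's theorem some `D_B`-ball contains a non-empty open set `U`. Every orbit enters `U`, and by
compactness two sufficiently close points enter `U` at a common time. Since `D_B` is `f`-invariant,
these two points are as `D_B`-close as two points of `U`.
-/

/-- The Cesàro mean `(g 0 + ⋯ + g (n - 1)) / n` of a real sequence, equal to `0` for `n = 0`. -/
noncomputable def cesaroMean (g : ℕ → ℝ) (n : ℕ) : ℝ := (∑ k ∈ Finset.range n, g k) / n

/-- The upper Cesàro mean of a real sequence. Both `upperDensity` and `besDB` are definitionally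
of this form; for an unbounded sequence the value carries no meaning. -/
noncomputable def upperMean (g : ℕ → ℝ) : ℝ := limsup (cesaroMean g) atTop

/-- The sequence of distances between the points of two forward orbits of `f`. -/
def orbitDist {X : Type*} [PseudoMetricSpace X] (f : X → X) (x y : X) (k : ℕ) : ℝ :=
  dist (f^[k] x) (f^[k] y)

lemma limsup_le_limsup_of_tendsto_sub {ι : Type*} {F : Filter ι} [F.NeBot] {u v : ι → ℝ}
    (hv : IsBoundedUnder (· ≤ ·) F v) (hv' : IsBoundedUnder (· ≥ ·) F v)
    (huv : Tendsto (u - v) F (𝓝 0)) : limsup u F ≤ limsup v F := by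
  calc limsup u F = limsup (v + (u - v)) F := by rw [add_sub_cancel]
    _ ≤ limsup v F + limsup (u - v) F :=
        limsup_add_le hv' hv huv.isBoundedUnder_ge.isCoboundedUnder_le huv.isBoundedUnder_le
    _ = limsup v F := by rw [huv.limsup_eq, add_zero]

section UpperMean

variable {g h : ℕ → ℝ}

lemma cesaroMean_add (g h : ℕ → ℝ) : cesaroMean (g + h) = cesaroMean g + cesaroMean h := by
  ext n
  simp only [cesaroMean, Pi.add_apply, Finset.sum_add_distrib, add_div]

lemma cesaroMean_mono (hgh : g ≤ h) : cesaroMean g ≤ cesaroMean h := fun n =>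
  div_le_div_of_nonneg_right (Finset.sum_le_sum fun k _ => hgh k) n.cast_nonneg

lemma cesaroMean_const_add_mul (g : ℕ → ℝ) (c a : ℝ) {n : ℕ} (hn : n ≠ 0) :
    cesaroMean (fun k => c + a * g k) n = c + a * cesaroMean g n := by
  have hn' : (n : ℝ) ≠ 0 := Nat.cast_ne_zero.2 hn
  simp only [cesaroMean, Finset.sum_add_distrib, Finset.sum_const, Finset.card_range,
    nsmul_eq_mul, ← Finset.mul_sum]
  field_simp

lemma cesaroMean_comp_succ_sub (g : ℕ → ℝ) (n : ℕ) :
    cesaroMean (fun k => g (k + 1)) n - cesaroMean g n = (g n - g 0) / n := by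
  rw [cesaroMean, cesaroMean, ← sub_div, ← Finset.sum_sub_distrib, Finset.sum_range_sub]

lemma isBounded_range_cesaroMean (hg : Bornology.IsBounded (range g)) :
    Bornology.IsBounded (range (cesaroMean g)) := by
  obtain ⟨C, hC⟩ := isBounded_iff_forall_norm_le.1 hg
  have hC0 : 0 ≤ C := (norm_nonneg _).trans (hC _ (mem_range_self 0))
  refine isBounded_iff_forall_norm_le.2 ⟨C, forall_mem_range.2 fun n => ?_⟩
  rw [cesaroMean, norm_div, Real.norm_natCast]
  refine div_le_of_le_mul₀ n.cast_nonneg hC0 ?_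
  calc ‖∑ k ∈ Finset.range n, g k‖
      ≤ ∑ _k ∈ Finset.range n, C := norm_sum_le_of_le _ fun k _ => hC _ (mem_range_self k)
    _ = C * n := by rw [Finset.sum_const, Finset.card_range, nsmul_eq_mul, mul_comm]

lemma isBounded_range_const_add_mul (hg : Bornology.IsBounded (range g)) (c a : ℝ) :
    Bornology.IsBounded (range fun k => c + a * g k) := by
  obtain ⟨C, hC⟩ := isBounded_iff_forall_norm_le.1 hg
  refine isBounded_iff_forall_norm_le.2 ⟨‖c‖ + ‖a‖ * C, forall_mem_range.2 fun k => ?_⟩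
  exact norm_add_le_of_le le_rfl (norm_mul_le_of_le le_rfl (hC _ (mem_range_self k)))

lemma isBoundedUnder_le_cesaroMean (hg : Bornology.IsBounded (range g)) :
    IsBoundedUnder (· ≤ ·) atTop (cesaroMean g) :=
  (isBounded_range_cesaroMean hg).bddAbove.isBoundedUnder_of_range

lemma isBoundedUnder_ge_cesaroMean (hg : Bornology.IsBounded (range g)) :
    IsBoundedUnder (· ≥ ·) atTop (cesaroMean g) :=
  (isBounded_range_cesaroMean hg).bddBelow.isBoundedUnder_of_range

lemma upperMean_mono (hg : Bornology.IsBounded (range g)) (hh : Bornology.IsBounded (range h))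
    (hgh : g ≤ h) : upperMean g ≤ upperMean h :=
  limsup_le_limsup (.of_forall (cesaroMean_mono hgh))
    (isBoundedUnder_ge_cesaroMean hg).isCoboundedUnder_le (isBoundedUnder_le_cesaroMean hh)

lemma upperMean_add_le (hg : Bornology.IsBounded (range g)) (hh : Bornology.IsBounded (range h)) :
    upperMean (g + h) ≤ upperMean g + upperMean h := by
  rw [upperMean, cesaroMean_add]
  exact limsup_add_le (isBoundedUnder_ge_cesaroMean hg) (isBoundedUnder_le_cesaroMean hg)
    (isBoundedUnder_ge_cesaroMean hh).isCoboundedUnder_le (isBoundedUnder_le_cesaroMean hh)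

lemma upperMean_const_add_mul (hg : Bornology.IsBounded (range g)) (c : ℝ) {a : ℝ} (ha : 0 ≤ a) :
    upperMean (fun k => c + a * g k) = c + a * upperMean g := by
  have hmono : Monotone fun t : ℝ => c + a * t := fun s t hst => by dsimp only; gcongr
  have hcont : Continuous fun t : ℝ => c + a * t := by fun_prop
  calc upperMean (fun k => c + a * g k)
      = limsup ((fun t => c + a * t) ∘ cesaroMean g) atTop := by
        refine limsup_congr ?_
        filter_upwards [eventually_ne_atTop 0] with n hn using cesaroMean_const_add_mul g c a hn
    _ = c + a * upperMean g :=
        (hmono.map_limsup_of_continuousAt _ hcont.continuousAt (isBoundedUnder_le_cesaroMean hg)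
          (isBoundedUnder_ge_cesaroMean hg).isCoboundedUnder_le).symm

lemma tendsto_cesaroMean_comp_succ_sub (hg : Bornology.IsBounded (range g)) :
    Tendsto (cesaroMean (fun k => g (k + 1)) - cesaroMean g) atTop (𝓝 0) := by
  obtain ⟨C, hC⟩ := isBounded_iff_forall_norm_le.1 hg
  refine squeeze_zero_norm (fun n => ?_) (tendsto_const_div_atTop_nhds_zero_nat (C + C))
  rw [Pi.sub_apply, cesaroMean_comp_succ_sub, norm_div, Real.norm_natCast]
  gcongr
  exact norm_sub_le_of_le (hC _ (mem_range_self n)) (hC _ (mem_range_self 0))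

lemma upperMean_comp_succ (hg : Bornology.IsBounded (range g)) :
    upperMean (fun k => g (k + 1)) = upperMean g := by
  have hs : Bornology.IsBounded (range fun k => g (k + 1)) :=
    hg.subset (range_comp_subset_range Nat.succ g)
  have hlim := tendsto_cesaroMean_comp_succ_sub hg
  have hlim' : Tendsto (cesaroMean g - cesaroMean fun k => g (k + 1)) atTop (𝓝 0) := by
    simpa only [Pi.sub_def, neg_sub, neg_zero] using hlim.neg
  exact le_antisymm
    (limsup_le_limsup_of_tendsto_sub (isBoundedUnder_le_cesaroMean hg)
      (isBoundedUnder_ge_cesaroMean hg) hlim)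
    (limsup_le_limsup_of_tendsto_sub (isBoundedUnder_le_cesaroMean hs)
      (isBoundedUnder_ge_cesaroMean hs) hlim')

end UpperMean

section UpperDensity

variable {g : ℕ → ℝ} {δ : ℝ}

lemma upperDensity_empty : upperDensity ∅ = 0 := by
  simp only [upperDensity, indicator_empty, Finset.sum_const_zero, zero_div, limsup_const]

lemma isBounded_range_indicator_one (E : Set ℕ) :
    Bornology.IsBounded (range (E.indicator fun _ => (1 : ℝ))) :=
  (Metric.isBounded_Icc 0 1).subset <| range_subset_iff.2 fun k =>
    ⟨indicator_nonneg (fun _ _ => zero_le_one) k, indicator_le_self' (fun _ _ => zero_le_one) k⟩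

lemma mul_upperDensity_le_upperMean (hδ : 0 ≤ δ) (hg₀ : 0 ≤ g)
    (hg : Bornology.IsBounded (range g)) : δ * upperDensity {k | δ ≤ g k} ≤ upperMean g := by
  have hE := isBounded_range_indicator_one {k | δ ≤ g k}
  calc δ * upperDensity {k | δ ≤ g k}
      = upperMean fun k => 0 + δ * {k | δ ≤ g k}.indicator (fun _ => (1 : ℝ)) k := by
        rw [upperMean_const_add_mul hE 0 hδ, zero_add]; rfl
    _ ≤ upperMean g := by
        refine upperMean_mono (isBounded_range_const_add_mul hE 0 δ) hg fun k => ?_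
        rw [indicator_apply]
        split_ifs with hk
        · rwa [zero_add, mul_one]
        · rw [mul_zero, add_zero]
          exact hg₀ k

lemma upperMean_le_add_mul_upperDensity {C : ℝ} (hδ : 0 ≤ δ) (hC : 0 ≤ C) (hgC : ∀ k, g k ≤ C)
    (hg : Bornology.IsBounded (range g)) :
    upperMean g ≤ δ + C * upperDensity {k | δ ≤ g k} := by
  have hE := isBounded_range_indicator_one {k | δ ≤ g k}
  calc upperMean g
      ≤ upperMean fun k => δ + C * {k | δ ≤ g k}.indicator (fun _ => (1 : ℝ)) k := by
        refine upperMean_mono hg (isBounded_range_const_add_mul hE δ C) fun k => ?_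
        rw [indicator_apply]
        split_ifs with hk
        · rw [mul_one]
          exact (hgC k).trans (le_add_of_nonneg_left hδ)
        · rw [mul_zero, add_zero]
          exact (not_le.1 hk).le
    _ = δ + C * upperDensity {k | δ ≤ g k} := upperMean_const_add_mul hE δ hC

end UpperDensity

section Besicovitch

variable {X : Type*} [PseudoMetricSpace X] {f : X → X}

lemma besDB_comm (f : X → X) (x y : X) : besDB dist f x y = besDB dist f y x := by
  simp only [besDB, dist_comm]

variable [BoundedSpace X]

lemma isBounded_range_orbitDist (f : X → X) (x y : X) :
    Bornology.IsBounded (range (orbitDist f x y)) :=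
  (Metric.isBounded_Icc 0 (Metric.diam (univ : Set X))).subset <| range_subset_iff.2 fun _ =>
    ⟨dist_nonneg, Metric.dist_le_diam_of_mem (.all _) (mem_univ _) (mem_univ _)⟩

lemma besDB_triangle (f : X → X) (x y z : X) :
    besDB dist f x z ≤ besDB dist f x y + besDB dist f y z := by
  have hxy := isBounded_range_orbitDist f x y
  have hyz := isBounded_range_orbitDist f y z
  calc besDB dist f x z ≤ upperMean (orbitDist f x y + orbitDist f y z) :=
        upperMean_mono (isBounded_range_orbitDist f x z)
          ((hxy.add hyz).subset (range_subset_iff.2 fun k =>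
            add_mem_add (mem_range_self k) (mem_range_self k)))
          fun k => dist_triangle _ _ _
    _ ≤ besDB dist f x y + besDB dist f y z := upperMean_add_le hxy hyz

lemma besDB_map (f : X → X) (x y : X) : besDB dist f (f x) (f y) = besDB dist f x y :=
  upperMean_comp_succ (g := orbitDist f x y) (isBounded_range_orbitDist f x y)

lemma besDB_iterate (f : X → X) (n : ℕ) (x y : X) :
    besDB dist f (f^[n] x) (f^[n] y) = besDB dist f x y := by
  induction n with
  | zero => rfl
  | succ n ih => rw [Function.iterate_succ_apply', Function.iterate_succ_apply', besDB_map, ih]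

lemma MeanEquicontinuousOn.exists_upperDensity_lt (h : MeanEquicontinuousOn dist f univ)
    {δ ν : ℝ} (hδ : 0 < δ) (hν : 0 < ν) :
    ∃ η > 0, ∀ x y, dist x y < η → upperDensity {k | δ ≤ dist (f^[k] x) (f^[k] y)} < ν := by
  obtain ⟨η, hη, hclose⟩ := h (δ * ν) (mul_pos hδ hν)
  refine ⟨η, hη, fun x y hxy => lt_of_mul_lt_mul_left ?_ hδ.le⟩
  calc δ * upperDensity {k | δ ≤ dist (f^[k] x) (f^[k] y)}
      ≤ besDB dist f x y := mul_upperDensity_le_upperMean hδ.le (fun _ => dist_nonneg)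
        (isBounded_range_orbitDist f x y)
    _ < δ * ν := hclose x (mem_univ x) y (mem_univ y) hxy

end Besicovitch

section SeparatedSets

variable {X : Type*} [PseudoMetricSpace X] {f : X → X} {A S : Set X} {δ ν : ℝ}

lemma sepNum_ne_top_of_totallyBounded (hA : TotallyBounded A) {η : ℝ} (hη : 0 < η)
    (hclose : ∀ x y, dist x y < η → upperDensity {k | δ ≤ dist (f^[k] x) (f^[k] y)} < ν) :
    sepNum dist f A δ ν ≠ ⊤ := by
  obtain ⟨t, htfin, hcover⟩ := Metric.totallyBounded_iff.1 hA (η / 2) (half_pos hη)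
  have hcenter : ∀ x ∈ A, ∃ c ∈ t, dist x c < η / 2 := fun x hx => by
    simpa only [mem_iUnion₂, Metric.mem_ball, exists_prop] using hcover hx
  choose! c hct hc using hcenter
  have hle : sepNum dist f A δ ν ≤ t.encard := iSup₂_le fun S ⟨hSA, hsep⟩ => by
    refine encard_le_encard_of_injOn (fun x hx => hct x (hSA hx)) fun x hx y hy hxy => ?_
    by_contra hne
    have hdist : dist x y < η := by
      calc dist x y ≤ dist x (c x) + dist y (c x) := dist_triangle_right _ _ _
        _ < η / 2 + η / 2 := add_lt_add (hc x (hSA hx)) (hxy ▸ hc y (hSA hy))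
        _ = η := add_halves η
    exact (hclose x y hdist).not_ge (hsep x hx y hy hne)
  exact (hle.trans_lt htfin.encard_lt_top).ne

theorem MeanEquicontinuousOn.sepNum_ne_top (hX : TotallyBounded (univ : Set X))
    (h : MeanEquicontinuousOn dist f univ) (hδ : 0 < δ) (hν : 0 < ν) :
    sepNum dist f univ δ ν ≠ ⊤ := by
  have : BoundedSpace X := ⟨hX.isBounded⟩
  obtain ⟨η, hη, hclose⟩ := h.exists_upperDensity_lt hδ hν
  exact sepNum_ne_top_of_totallyBounded hX hη hclose

lemma exists_maximal_isSepSet (f : X → X) (A : Set X) (δ ν : ℝ) :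
    ∃ S, Maximal (IsSepSet dist f A δ ν) S :=
  zorn_subset {S | IsSepSet dist f A δ ν S} fun c hc hchain =>
    ⟨⋃₀ c, ⟨sUnion_subset fun _ hS => (hc hS).1,
      (pairwise_sUnion hchain.directedOn).2 fun _ hS => (hc hS).2⟩,
      fun _ => subset_sUnion_of_mem⟩

lemma exists_mem_upperDensity_lt_of_maximal (hδ : 0 < δ) (hν : 0 < ν)
    (hS : Maximal (IsSepSet dist f A δ ν) S) {x : X} (hx : x ∈ A) :
    ∃ y ∈ S, upperDensity {k | δ ≤ dist (f^[k] x) (f^[k] y)} < ν := by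
  by_contra! hfar
  have hins : IsSepSet dist f A δ ν (insert x S) := by
    refine ⟨insert_subset hx hS.prop.1, pairwise_insert.2 ⟨hS.prop.2, fun y hy _ => ?_⟩⟩
    exact ⟨hfar y hy, by simpa only [dist_comm] using hfar y hy⟩
  have hxS : x ∈ S := hS.le_of_ge hins (subset_insert x S) (mem_insert x S)
  have := hfar x hxS
  simp only [dist_self, hδ.not_ge, ofPred_false, upperDensity_empty] at this
  exact hν.not_ge this

lemma exists_finite_upperDensity_lt (hδ : 0 < δ) (hν : 0 < ν)
    (hfin : sepNum dist f A δ ν ≠ ⊤) :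
    ∃ S : Set X, S.Finite ∧
      ∀ x ∈ A, ∃ y ∈ S, upperDensity {k | δ ≤ dist (f^[k] x) (f^[k] y)} < ν := by
  obtain ⟨S, hS⟩ := exists_maximal_isSepSet f A δ ν
  refine ⟨S, encard_lt_top_iff.1 ?_, fun x => exists_mem_upperDensity_lt_of_maximal hδ hν hS⟩
  calc S.encard ≤ sepNum dist f A δ ν := le_iSup₂_of_le S hS.prop le_rfl
    _ < ⊤ := lt_top_iff_ne_top.2 hfin

lemma exists_finite_besDB_lt [BoundedSpace X]
    (hfin : ∀ δ : ℝ, 0 < δ → ∀ ν : ℝ, 0 < ν → ν ≤ 1 → sepNum dist f A δ ν ≠ ⊤)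
    {ε : ℝ} (hε : 0 < ε) :
    ∃ S : Set X, S.Finite ∧ ∀ x ∈ A, ∃ y ∈ S, besDB dist f x y < ε := by
  obtain ⟨C, hC, hdist⟩ : ∃ C : ℝ, 0 < C ∧ ∀ x y : X, dist x y ≤ C :=
    ⟨Metric.diam (univ : Set X) + 1, by positivity, fun x y =>
      (Metric.dist_le_diam_of_mem (.all _) (mem_univ x) (mem_univ y)).trans
        (le_add_of_nonneg_right zero_le_one)⟩
  have hν : 0 < min 1 (ε / 2 / C) := by positivity
  obtain ⟨S, hSfin, hS⟩ := exists_finite_upperDensity_lt (half_pos hε) hν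
    (hfin (ε / 2) (half_pos hε) _ hν (min_le_left _ _))
  refine ⟨S, hSfin, fun x hx => ?_⟩
  obtain ⟨y, hy, hxy⟩ := hS x hx
  refine ⟨y, hy, ?_⟩
  calc besDB dist f x y
      ≤ ε / 2 + C * upperDensity {k | ε / 2 ≤ dist (f^[k] x) (f^[k] y)} :=
        upperMean_le_add_mul_upperDensity (half_pos hε).le hC.le (fun _ => hdist _ _)
          (isBounded_range_orbitDist f x y)
    _ < ε / 2 + C * (ε / 2 / C) := by gcongr; exact hxy.trans_le (min_le_right _ _)
    _ = ε := by rw [mul_div_cancel₀ _ hC.ne', add_halves]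

end SeparatedSets

section Baire

variable {X : Type*} [PseudoMetricSpace X] {f : X → X}

lemma continuous_cesaroMean_orbitDist (hf : Continuous f) (y : X) (n : ℕ) :
    Continuous fun x => cesaroMean (orbitDist f x y) n :=
  (continuous_finsetSum _ fun k _ => (hf.iterate k).dist continuous_const).div_const _

lemma exists_isOpen_besDB_le [BoundedSpace X] [BaireSpace X] [Nonempty X] (hf : Continuous f)
    {S : Set X} (hS : S.Countable) {η : ℝ} (hnet : ∀ x, ∃ y ∈ S, besDB dist f x y < η) :
    ∃ U : Set X, IsOpen U ∧ U.Nonempty ∧ ∃ y ∈ S, ∀ x ∈ U, besDB dist f x y ≤ η := by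
  have : Countable S := hS.to_subtype
  let F : S × ℕ → Set X := fun p => {x | ∀ n ≥ p.2, cesaroMean (orbitDist f x p.1) n ≤ η}
  have hclosed : ∀ p, IsClosed (F p) := fun p => by
    simp only [F, ofPred_forall]
    exact isClosed_biInter fun n _ =>
      isClosed_le (continuous_cesaroMean_orbitDist hf p.1 n) continuous_const
  have hcover : ⋃ p, F p = univ := eq_univ_of_forall fun x => by
    obtain ⟨y, hy, hxy⟩ := hnet x
    have hev : ∀ᶠ n in atTop, cesaroMean (orbitDist f x y) n < η :=
      eventually_lt_of_limsup_lt hxy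
        (isBoundedUnder_le_cesaroMean (isBounded_range_orbitDist f x y))
    obtain ⟨N, hN⟩ := eventually_atTop.1 hev
    exact mem_iUnion.2 ⟨(⟨y, hy⟩, N), fun n hn => (hN n hn).le⟩
  obtain ⟨⟨⟨y, hy⟩, N⟩, hne⟩ := nonempty_interior_of_iUnion_of_closed hclosed hcover
  refine ⟨interior (F (⟨y, hy⟩, N)), isOpen_interior, hne, y, hy, fun x hx => ?_⟩
  exact limsup_le_of_le
    (isBoundedUnder_ge_cesaroMean (isBounded_range_orbitDist f x y)).isCoboundedUnder_le
    (eventually_atTop.2 ⟨N, interior_subset hx⟩)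

end Baire

lemma exists_forall_dist_lt_exists_iterate_mem {X : Type*} [PseudoMetricSpace X] [CompactSpace X]
    {f : X → X} (hf : Continuous f) (hdense : ∀ x, Dense (range fun n : ℕ => f^[n] x))
    {U : Set X} (hU : IsOpen U) (hne : U.Nonempty) :
    ∃ δ > 0, ∀ x y, dist x y < δ → ∃ n : ℕ, f^[n] x ∈ U ∧ f^[n] y ∈ U := by
  have hcover : (univ : Set X) ⊆ ⋃ n : ℕ, f^[n] ⁻¹' U := fun x _ => by
    obtain ⟨_, ⟨n, rfl⟩, hn⟩ := (hdense x).exists_mem_open hU hne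
    exact mem_iUnion.2 ⟨n, hn⟩
  obtain ⟨δ, hδ, hball⟩ := lebesgue_number_lemma_of_metric isCompact_univ
    (fun n => hU.preimage (hf.iterate n)) hcover
  refine ⟨δ, hδ, fun x y hxy => ?_⟩
  obtain ⟨n, hn⟩ := hball x (mem_univ x)
  exact ⟨n, hn (Metric.mem_ball_self hδ), hn (Metric.mem_ball'.2 hxy)⟩

theorem meanEquicontinuousOn_of_sepNum_ne_top {X : Type*} [PseudoMetricSpace X] [CompactSpace X]
    {f : X → X} (hf : Continuous f) (hdense : ∀ x, Dense (range fun n : ℕ => f^[n] x))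
    (hfin : ∀ δ : ℝ, 0 < δ → ∀ ν : ℝ, 0 < ν → ν ≤ 1 → sepNum dist f univ δ ν ≠ ⊤) :
    MeanEquicontinuousOn dist f univ := by
  intro ε hε
  rcases isEmpty_or_nonempty X with _ | _
  · exact ⟨1, one_pos, fun x => isEmptyElim x⟩
  obtain ⟨S, hSfin, hS⟩ := exists_finite_besDB_lt hfin (show 0 < ε / 3 by positivity)
  obtain ⟨U, hU, hne, z, -, hUz⟩ :=
    exists_isOpen_besDB_le hf hSfin.countable fun x => hS x (mem_univ x)
  obtain ⟨δ, hδ, hhit⟩ := exists_forall_dist_lt_exists_iterate_mem hf hdense hU hne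
  refine ⟨δ, hδ, fun x _ y _ hxy => ?_⟩
  obtain ⟨n, hnx, hny⟩ := hhit x y hxy
  calc besDB dist f x y = besDB dist f (f^[n] x) (f^[n] y) := (besDB_iterate f n x y).symm
    _ ≤ besDB dist f (f^[n] x) z + besDB dist f z (f^[n] y) := besDB_triangle f _ z _
    _ = besDB dist f (f^[n] x) z + besDB dist f (f^[n] y) z := by rw [besDB_comm f z]
    _ ≤ ε / 3 + ε / 3 := add_le_add (hUz _ hnx) (hUz _ hny)
    _ < ε := by linarith

section Minimality

variable {X : Type*} [TopologicalSpace X] [CompactSpace X] [T2Space X] {f : X → X}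

lemma image_omegaLimit_iterate (hf : Continuous f) (x : X) :
    f '' omegaLimit atTop (fun n : ℕ => f^[n]) {x} = omegaLimit atTop (fun n : ℕ => f^[n]) {x} := by
  ext y
  simp only [mem_image, mem_omegaLimit_singleton_iff_mapClusterPt]
  constructor
  · rintro ⟨z, hz, rfl⟩
    refine .of_comp (tendsto_add_atTop_nat 1) ?_
    simpa only [Function.comp_def, Function.iterate_succ_apply'] using
      hz.continuousAt_comp hf.continuousAt
  · intro hy
    obtain ⟨V, hV, hVy⟩ := mapClusterPt_iff_ultrafilter.1 hy
    obtain ⟨z, -, hz⟩ := isCompact_univ.ultrafilter_le_nhds (V.map fun n => f^[n - 1] x) (by simp)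
    have hz : Tendsto (fun n => f^[n - 1] x) V (𝓝 z) := hz
    refine ⟨z, ?_, ?_⟩
    · exact .of_comp (tendsto_sub_atTop_nat 1) (mapClusterPt_iff_ultrafilter.2 ⟨V, hV, hz⟩)
    · refine tendsto_nhds_unique (((hf.tendsto z).comp hz).congr' ?_) hVy
      filter_upwards [hV (eventually_ne_atTop 0)] with n hn
      rw [Function.comp_apply, ← Function.iterate_succ_apply' f,
        Nat.succ_eq_add_one, Nat.sub_add_cancel (Nat.one_le_iff_ne_zero.2 hn)]

lemma dense_range_iterate_of_minimal (hf : Continuous f)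
    (hmin : ∀ E : Set X, IsClosed E → f '' E = E → E = ∅ ∨ E = univ) (x : X) :
    Dense (range fun n : ℕ => f^[n] x) := by
  have huniv : omegaLimit atTop (fun n : ℕ => f^[n]) {x} = univ :=
    (hmin _ (isClosed_omegaLimit ..) (image_omegaLimit_iterate hf x)).resolve_left
      (nonempty_omegaLimit _ _ _ (singleton_nonempty x)).ne_empty
  intro y
  have hy := (mem_omegaLimit_singleton_iff_mapClusterPt ..).1 (huniv.symm ▸ mem_univ y)
  refine mem_closure_iff_nhds.2 fun V hV => ?_
  obtain ⟨n, hn⟩ := (hy.frequently hV).exists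
  exact ⟨f^[n] x, hn, n, rfl⟩

end Minimality

/-- Minimality is replaced by density of all forward orbits: without the Hausdorff property there
need not be any non-empty closed `E` with `f '' E = E`, even if `f` has a proper closed invariant
subset. -/
theorem minimal_mean_equicontinuous_iff_finite_separation_numbers_general
    {X : Type*} [PseudoMetricSpace X] [CompactSpace X] (f : X → X) (hf : Continuous f)
    (hdense : ∀ x, Dense (range fun n : ℕ => f^[n] x)) :
    MeanEquicontinuousOn dist f Set.univ ↔
      (∀ δ : ℝ, 0 < δ → ∀ ν : ℝ, 0 < ν → ν ≤ 1 → sepNum dist f Set.univ δ ν ≠ ⊤) :=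
  ⟨fun h _ hδ _ hν _ => h.sepNum_ne_top isCompact_univ.totallyBounded hδ hν,
    meanEquicontinuousOn_of_sepNum_ne_top hf hdense⟩

/-- A minimal dynamical system on a compact metric space is mean
equicontinuous if and only if it has finite separation numbers. -/
theorem minimal_mean_equicontinuous_iff_finite_separation_numbers
    {X : Type*} [MetricSpace X] [CompactSpace X] (f : X → X) (hf : Continuous f)
    (hmin : ∀ E : Set X, IsClosed E → f '' E = E → E = ∅ ∨ E = Set.univ) :
    MeanEquicontinuousOn dist f Set.univ ↔
      (∀ δ : ℝ, 0 < δ → ∀ ν : ℝ, 0 < ν → ν ≤ 1 → sepNum dist f Set.univ δ ν ≠ ⊤) :=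
  minimal_mean_equicontinuous_iff_finite_separation_numbers_general f hf
    (dense_range_iterate_of_minimal hf hmin)
end

section
/- Let A and B be finite alphabets, X ⊆ A^ℤ closed and σ^n-invariant and Y ⊆ B^ℤ closed and σ^m-invariant for some n,m ≥ 1, and let h : X → Y be a continuous surjection with h∘σ^n = σ^m∘h. Then the map [x]_A ↦ [h(x)]_B is well defined and Lipschitz continuous from ([X]_A, D_1) to ([Y]_B, D_1). In particular, if h is a homeomorphism conjugating (X,σ^n) and (Y,σ^m), this map is a Lipschitz homeomorphism with Lipschitz inverse. -/
open Filter Topology Set MeasureTheory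
open scoped ENNReal

/-! By compactness, finitely many coordinates of `x` determine the block `h(x)_0 … h(x)_{m-1}`. By
equivariance, a disagreement of `h(x)` and `h(x')` at a position `j` then forces a disagreement of
`x` and `x'` at some position `k` with `|m k - n j|` bounded uniformly in `x`, `x'` and `j`. For
each `k` only boundedly many `j` satisfy this bound, so the disagreements of the images are at most
a constant times as dense as those of the points. When `h` is injective, finitely many coordinates
of `h(x)` determine the block `x_0 … x_{n-1}`, and the same argument applies with the roles of `x`
and `h(x)` exchanged. -/

section UpperDensity

variable {E F : Set ℕ}

open scoped Classical in
theorem upperDensity_eq_limsup_count (E : Set ℕ) :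
    upperDensity E = limsup (fun M : ℕ => (Nat.count (· ∈ E) M : ℝ) / M) atTop := by
  simp only [upperDensity, Set.indicator_apply, Finset.sum_boole, Nat.count_eq_card_filter_range]

open scoped Classical in
theorem count_div_le_one (E : Set ℕ) (M : ℕ) : (Nat.count (· ∈ E) M : ℝ) / M ≤ 1 :=
  div_le_one_of_le₀ (mod_cast Nat.count_le _) M.cast_nonneg

theorem upperDensity_nonneg (E : Set ℕ) : 0 ≤ upperDensity E := by
  classical
  rw [upperDensity_eq_limsup_count]
  exact le_limsup_of_frequently_le (Frequently.of_forall fun M => by positivity)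
    (isBoundedUnder_of ⟨1, count_div_le_one E⟩)

open scoped Classical in
theorem eventually_count_div_lt {t : ℝ} (ht : upperDensity E < t) :
    ∀ᶠ M : ℕ in atTop, (Nat.count (· ∈ E) M : ℝ) / M < t :=
  eventually_lt_of_limsup_lt (upperDensity_eq_limsup_count E ▸ ht)
    (isBoundedUnder_of ⟨1, count_div_le_one E⟩)

open scoped Classical in
theorem upperDensity_le_of_tendsto {f : ℕ → ℝ} {a : ℝ}
    (hf : ∀ᶠ M : ℕ in atTop, (Nat.count (· ∈ E) M : ℝ) / M ≤ f M) (ha : Tendsto f atTop (𝓝 a)) :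
    upperDensity E ≤ a := by
  rw [upperDensity_eq_limsup_count, ← ha.limsup_eq]
  exact limsup_le_limsup hf
    (isBoundedUnder_of ⟨0, fun M => by positivity⟩ : IsBoundedUnder (· ≥ ·) _ _).isCoboundedUnder_le
    ha.isBoundedUnder_le

open scoped Classical in
theorem upperDensity_le_of_count_le {n : ℕ} (hn : 1 ≤ n) {C D : ℝ} (hC : 0 ≤ C)
    (hcount : ∀ M, (Nat.count (· ∈ F) M : ℝ) ≤ C * Nat.count (· ∈ E) (n * M) + D) :
    upperDensity F ≤ C * n * upperDensity E := by
  have le_of_gt (t : ℝ) (ht : upperDensity E < t) : upperDensity F ≤ C * n * t := by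
    have hlim : Tendsto (fun M : ℕ => C * n * t + D / M) atTop (𝓝 (C * n * t)) := by
      simpa only [add_zero] using (tendsto_const_div_atTop_nhds_zero_nat D).const_add (C * n * t)
    refine upperDensity_le_of_tendsto ?_ hlim
    have hmul : Tendsto (n * ·) atTop atTop := tendsto_id.const_mul_atTop' hn
    filter_upwards [hmul.eventually (eventually_count_div_lt ht), eventually_gt_atTop 0]
      with M hM hMpos
    calc (Nat.count (· ∈ F) M : ℝ) / M
        ≤ (C * Nat.count (· ∈ E) (n * M) + D) / M := by gcongr; exact hcount M
      _ = C * n * (Nat.count (· ∈ E) (n * M) / (n * M : ℕ)) + D / M := by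
        push_cast; field_simp
      _ ≤ C * n * t + D / M := by gcongr
  have hlim : Tendsto (fun t => C * n * t) (𝓝[>] upperDensity E) (𝓝 (C * n * upperDensity E)) :=
    (continuous_const_mul (C * n)).continuousWithinAt
  exact ge_of_tendsto hlim (eventually_mem_nhdsWithin.mono le_of_gt)

theorem card_le_of_abs_sub_mul_le {n D : ℕ} (hn : 1 ≤ n) (c : ℤ) (s : Finset ℕ)
    (hs : ∀ j ∈ s, |c - n * j| ≤ D) : s.card ≤ 2 * D + 1 := by
  have hmaps : ∀ j ∈ s, (n * j : ℤ) ∈ Finset.Icc (c - D) (c + D) := fun j hj => by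
    have := abs_le.1 (hs j hj)
    exact Finset.mem_Icc.2 ⟨by linarith, by linarith⟩
  have hinj : Set.InjOn (fun j : ℕ => (n * j : ℤ)) s := fun i _ j _ hij => by
    have hn0 : (n : ℤ) ≠ 0 := by omega
    exact_mod_cast mul_left_cancel₀ hn0 hij
  refine (Finset.card_le_card_of_injOn _ hmaps hinj).trans ?_
  rw [Int.card_Icc]
  omega

theorem card_le_mul_card_of_exists_abs_sub_le {n m D : ℕ} (hn : 1 ≤ n) {s t : Finset ℕ}
    (hst : ∀ j ∈ s, ∃ k ∈ t, |(m * k - n * j : ℤ)| ≤ D) : s.card ≤ (2 * D + 1) * t.card := by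
  choose! g hgt hg using hst
  refine Finset.card_le_mul_card_image_of_maps_to hgt _ fun k _ => ?_
  refine card_le_of_abs_sub_mul_le hn (m * k) _ fun j hj => ?_
  obtain ⟨hjs, rfl⟩ := Finset.mem_filter.1 hj
  exact hg j hjs

open scoped Classical in
theorem count_le_of_forall_exists_abs_sub_le {n m D J : ℕ} (hn : 1 ≤ n) (hm : 1 ≤ m)
    (hFE : ∀ j ≥ J, j ∈ F → ∃ k ∈ E, |(m * k - n * j : ℤ)| ≤ D) (M : ℕ) :
    Nat.count (· ∈ F) M ≤ (2 * D + 1) * (Nat.count (· ∈ E) (n * M) + D) + J := by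
  set s := {j ∈ Finset.range M | j ∈ F ∧ J ≤ j} with hs
  have hnear : ∀ j ∈ s, ∃ k ∈ {k ∈ Finset.range (n * M + D) | k ∈ E},
      |(m * k - n * j : ℤ)| ≤ D := fun j hj => by
    simp only [hs, Finset.mem_filter, Finset.mem_range] at hj ⊢
    obtain ⟨hjM, hjF, hJj⟩ := hj
    obtain ⟨k, hkE, hk⟩ := hFE j hJj hjF
    have hdist : m * k ≤ n * j + D := by
      zify
      linarith [(abs_le.1 hk).2]
    refine ⟨k, ⟨?_, hkE⟩, hk⟩
    calc k ≤ m * k := Nat.le_mul_of_pos_left _ hm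
      _ ≤ n * j + D := hdist
      _ < n * M + D := by gcongr
  have hcover : {j ∈ Finset.range M | j ∈ F} ⊆ s ∪ Finset.range J := fun j hj => by
    simp only [hs, Finset.mem_union, Finset.mem_filter, Finset.mem_range] at hj ⊢
    grind
  calc Nat.count (· ∈ F) M
      ≤ s.card + J := by
        rw [Nat.count_eq_card_filter_range]
        exact (Finset.card_le_card hcover).trans
          ((Finset.card_union_le _ _).trans_eq (by rw [Finset.card_range]))
    _ ≤ (2 * D + 1) * Nat.count (· ∈ E) (n * M + D) + J := by
        rw [Nat.count_eq_card_filter_range (· ∈ E)]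
        gcongr
        exact card_le_mul_card_of_exists_abs_sub_le hn hnear
    _ ≤ (2 * D + 1) * (Nat.count (· ∈ E) (n * M) + D) + J := by
        rw [Nat.count_add]
        gcongr
        exact Nat.count_le _

theorem upperDensity_le_of_eventually_exists_abs_sub_le {n m D : ℕ} (hn : 1 ≤ n) (hm : 1 ≤ m)
    (hFE : ∀ᶠ j : ℕ in atTop, j ∈ F → ∃ k ∈ E, |(m * k - n * j : ℤ)| ≤ D) :
    upperDensity F ≤ (2 * D + 1) * n * upperDensity E := by
  classical
  obtain ⟨J, hJ⟩ := eventually_atTop.1 hFE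
  refine upperDensity_le_of_count_le (D := (2 * D + 1) * D + J) hn (by positivity) fun M => ?_
  have hcount := count_le_of_forall_exists_abs_sub_le hn hm hJ M
  rify at hcount
  linarith

end UpperDensity

theorem besD1_nonneg {A : Type*} (x y : ℤ → A) : 0 ≤ besD1 x y :=
  upperDensity_nonneg _

theorem shift_iterate_apply {A : Type*} (x : ℤ → A) (k : ℕ) (i : ℤ) :
    shift^[k] x i = x (i + k) := by
  induction k generalizing i with
  | zero => simp
  | succ k ih =>
    rw [Function.iterate_succ_apply']
    simp only [shift, ih]
    push_cast
    ring_nf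

theorem apply_iterate_of_semiconj_shift {Z A : Type*} {n : ℕ} {T : Z → Z} {u : Z → ℤ → A}
    (hT : Function.Semiconj u T shift^[n]) (k : ℕ) (z : Z) (i : ℤ) :
    u (T^[k] z) i = u z (i + (n * k : ℕ)) := by
  rw [(hT.iterate_right k).eq, ← Function.iterate_mul, shift_iterate_apply]

theorem exists_finset_determining_of_factorsThrough {Z ι W : Type*} {π : ι → Type*}
    [TopologicalSpace Z] [CompactSpace Z] [∀ i, TopologicalSpace (π i)] [∀ i, T2Space (π i)]
    [TopologicalSpace W] [DiscreteTopology W] {u : Z → ∀ i, π i} {w : Z → W}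
    (hu : Continuous u) (hw : Continuous w) (hwu : w.FactorsThrough u) :
    ∃ s : Finset ι, ∀ z z', (∀ i ∈ s, u z i = u z' i) → w z = w z' := by
  let agree (s : Finset ι) : Set (Z × Z) := {p | ∀ i ∈ s, u p.1 i = u p.2 i}
  have hanti : Antitone agree := fun s t hst p hp i hi => hp i (hst hi)
  have hclosed (s : Finset ι) : IsClosed (agree s) := by
    simp only [agree, Set.ofPred_forall]
    exact isClosed_biInter fun i _ => isClosed_eq (by fun_prop) (by fun_prop)
  have hopen : IsOpen {p : Z × Z | w p.1 = w p.2} :=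
    (isOpen_discrete (Set.diagonal W)).preimage (hw.prodMap hw)
  obtain ⟨s, hs⟩ := exists_subset_nhds_of_compactSpace hanti.directed_ge hclosed fun p hp =>
    hopen.mem_nhds <| hwu <| funext fun i =>
      Set.mem_iInter.1 hp {i} i (Finset.mem_singleton_self i)
  exact ⟨s, fun z z' hz => @hs (z, z') hz⟩

section Factor

variable {Z A B : Type*} [TopologicalSpace Z] [CompactSpace Z] [TopologicalSpace A] [T2Space A]
  [TopologicalSpace B] [DiscreteTopology B] {n m : ℕ} {T : Z → Z} {u : Z → ℤ → A} {v : Z → ℤ → B}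

theorem exists_window_determining_block (m : ℕ) (hu : Continuous u) (hv : Continuous v)
    (hvu : v.FactorsThrough u) :
    ∃ N : ℕ, ∀ z z', (∀ i : ℤ, |i| ≤ N → u z i = u z' i) → ∀ r < m, v z r = v z' r := by
  let block (z : Z) (r : Fin m) : B := v z r
  have hblock : Continuous block := by fun_prop
  obtain ⟨s, hs⟩ := exists_finset_determining_of_factorsThrough hu hblock fun z z' hz =>
    funext fun r : Fin m => congrFun (hvu hz) r
  refine ⟨s.sup Int.natAbs, fun z z' hz r hr => ?_⟩
  refine congrFun (hs z z' fun i hi => hz i ?_) ⟨r, hr⟩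
  rw [Int.abs_eq_natAbs]
  exact_mod_cast Finset.le_sup hi

theorem exists_eventually_ne_near (hn : 1 ≤ n) (hm : 1 ≤ m) (hu : Continuous u)
    (hv : Continuous v) (hvu : v.FactorsThrough u) (hTu : Function.Semiconj u T shift^[n])
    (hTv : Function.Semiconj v T shift^[m]) :
    ∃ D : ℕ, ∀ z z', ∀ᶠ j : ℕ in atTop, v z j ≠ v z' j →
      ∃ k : ℕ, u z k ≠ u z' k ∧ |(m * k - n * j : ℤ)| ≤ D := by
  obtain ⟨N, hN⟩ := exists_window_determining_block m hu hv hvu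
  refine ⟨m * N + n * m, fun z z' => ?_⟩
  filter_upwards [eventually_ge_atTop (m * N)] with j hj hne
  obtain ⟨q, r, hr, rfl⟩ : ∃ q r, r < m ∧ j = r + m * q :=
    ⟨j / m, j % m, Nat.mod_lt j hm, (Nat.mod_add_div j m).symm⟩
  obtain ⟨i, hi, hne⟩ : ∃ i : ℤ, |i| ≤ N ∧ u z (i + (n * q : ℕ)) ≠ u z' (i + (n * q : ℕ)) := by
    by_contra! hagree
    refine hne ?_
    simpa only [apply_iterate_of_semiconj_shift hTv, ← Nat.cast_add] using
      hN (T^[q] z) (T^[q] z') (by simpa only [apply_iterate_of_semiconj_shift hTu]) r hr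
  have hi_ge : -(N : ℤ) ≤ i := (abs_le.1 hi).1
  have hNq : N ≤ n * q := by
    have hlt : m * N < m * (q + 1) := by linarith
    exact (Nat.lt_succ_iff.1 (lt_of_mul_lt_mul_left' hlt)).trans (Nat.le_mul_of_pos_left q hn)
  lift i + (n * q : ℕ) to ℕ using by omega with k hk
  refine ⟨k, hne, ?_⟩
  calc |(m * k - n * (r + m * q : ℕ) : ℤ)| = |m * i - n * r| := by
        rw [hk]; push_cast; ring_nf
    _ ≤ m * |i| + n * r := by
        simpa only [abs_mul, Nat.abs_cast] using abs_sub (m * i : ℤ) (n * r)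
    _ ≤ (m * N + n * m : ℕ) := by
        push_cast
        gcongr

theorem exists_besD1_le_mul_besD1 (hn : 1 ≤ n) (hm : 1 ≤ m) (hu : Continuous u)
    (hv : Continuous v) (hvu : v.FactorsThrough u) (hTu : Function.Semiconj u T shift^[n])
    (hTv : Function.Semiconj v T shift^[m]) :
    ∃ L : ℝ, 0 ≤ L ∧ ∀ z z', besD1 (v z) (v z') ≤ L * besD1 (u z) (u z') := by
  obtain ⟨D, hD⟩ := exists_eventually_ne_near hn hm hu hv hvu hTu hTv
  exact ⟨(2 * D + 1) * n, by positivity, fun z z' =>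
    upperDensity_le_of_eventually_exists_abs_sub_le hn hm (hD z z')⟩

end Factor

theorem factor_map_besicovitch_lipschitz_general
    {A B : Type*} [TopologicalSpace A] [DiscreteTopology A]
    [TopologicalSpace B] [DiscreteTopology B] {n m : ℕ} (hn : 1 ≤ n) (hm : 1 ≤ m)
    {X : Set (ℤ → A)} (hX : IsCompact X) (hXmaps : MapsTo shift^[n] X X)
    {h : (ℤ → A) → (ℤ → B)} (hcont : ContinuousOn h X)
    (hequiv : ∀ x ∈ X, h (shift^[n] x) = shift^[m] (h x)) :
    ((∀ x ∈ X, ∀ x' ∈ X, besD1 x x' = 0 → besD1 (h x) (h x') = 0) ∧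
      (∃ L : ℝ, 0 ≤ L ∧ ∀ x ∈ X, ∀ x' ∈ X, besD1 (h x) (h x') ≤ L * besD1 x x')) ∧
    (Set.InjOn h X →
      ∃ L' : ℝ, 0 ≤ L' ∧ ∀ x ∈ X, ∀ x' ∈ X, besD1 x x' ≤ L' * besD1 (h x) (h x')) := by
  have : CompactSpace X := isCompact_iff_compactSpace.1 hX
  let T : X → X := hXmaps.restrict shift^[n] X X
  have hval : Function.Semiconj Subtype.val T shift^[n] := fun _ => rfl
  have hsemiconj : Function.Semiconj (X.domRestrict h) T shift^[m] := fun x => hequiv x x.2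
  have hcont' : Continuous (X.domRestrict h) := hcont.domRestrict
  obtain ⟨L, hL0, hL⟩ := exists_besD1_le_mul_besD1 hn hm continuous_subtype_val hcont'
    (fun _ _ hxx' => congrArg h hxx') hval hsemiconj
  refine ⟨⟨fun x hx x' hx' hzero => ?_, L, hL0, fun x hx x' hx' => hL ⟨x, hx⟩ ⟨x', hx'⟩⟩,
    fun hinj => ?_⟩
  · refine le_antisymm ((hL ⟨x, hx⟩ ⟨x', hx'⟩).trans_eq ?_) (besD1_nonneg _ _)
    rw [hzero, mul_zero]
  · obtain ⟨L', hL'0, hL'⟩ := exists_besD1_le_mul_besD1 hm hn hcont' continuous_subtype_val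
      (hinj.injective.factorsThrough _) hsemiconj hval
    exact ⟨L', hL'0, fun x hx x' hx' => hL' ⟨x, hx⟩ ⟨x', hx'⟩⟩

/-- A factor map `h` between a `σ^n`-invariant set `X ⊆ A^ℤ` and a
`σ^m`-invariant set `Y ⊆ B^ℤ` induces a well-defined Lipschitz continuous map
`[x]_A ↦ [h(x)]_B` between the corresponding subsets of the Besicovitch spaces;
if `h` is moreover injective (a conjugacy), the induced map is a Lipschitz homeomorphism
with Lipschitz inverse. -/
theorem factor_map_besicovitch_lipschitz
    {A B : Type} [Fintype A] [TopologicalSpace A] [DiscreteTopology A]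
    [Fintype B] [TopologicalSpace B] [DiscreteTopology B]
    (n m : ℕ) (hn : 1 ≤ n) (hm : 1 ≤ m)
    (X : Set (ℤ → A)) (hXcl : IsClosed X) (hXinv : shift^[n] '' X = X)
    (Y : Set (ℤ → B)) (hYcl : IsClosed Y) (hYinv : shift^[m] '' Y = Y)
    (h : (ℤ → A) → (ℤ → B)) (hcont : ContinuousOn h X) (hsurj : h '' X = Y)
    (hequiv : ∀ x ∈ X, h (shift^[n] x) = shift^[m] (h x)) :
    ((∀ x ∈ X, ∀ x' ∈ X, besD1 x x' = 0 → besD1 (h x) (h x') = 0) ∧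
      (∃ L : ℝ, 0 ≤ L ∧ ∀ x ∈ X, ∀ x' ∈ X, besD1 (h x) (h x') ≤ L * besD1 x x')) ∧
    (Set.InjOn h X →
      ∃ L' : ℝ, 0 ≤ L' ∧ ∀ x ∈ X, ∀ x' ∈ X, besD1 x x' ≤ L' * besD1 (h x) (h x')) := by
  exact factor_map_besicovitch_lipschitz_general hn hm hXcl.isCompact
    (mapsTo_iff_image_subset.2 hXinv.subset) hcont hequiv
end

section
/- Let θ : A → A^ℓ be a substitution of constant length ℓ over a finite alphabet A, extended to A^ℤ, and let c(θ) = min_{a≠b} #{0 ≤ j < ℓ : θ(a)_j = θ(b)_j} and C(θ) = max_{a≠b} #{0 ≤ j < ℓ : θ(a)_j = θ(b)_j}. Then for all x,y ∈ A^ℤ: ((ℓ − C(θ))/ℓ)·D_1(x,y) ≤ D_1(θ(x),θ(y)) ≤ ((ℓ − c(θ))/ℓ)·D_1(x,y). -/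
open Filter Topology Set MeasureTheory
open scoped ENNReal

/-!
Cut `θ(x)` and `θ(y)` into blocks of length `ℓ`. The blocks at index `k` are the words `θ(x_k)` and
`θ(y_k)`: they coincide if `x_k = y_k`, and otherwise their Hamming distance lies between `ℓ - C(θ)`
and `ℓ - c(θ)`. So the number of mismatches of `θ(x)` and `θ(y)` below `ℓN` lies between `ℓ - C(θ)`
and `ℓ - c(θ)` times the number of mismatches of `x` and `y` below `N`. Now divide by `ℓN`:
the upper density may be computed along the multiples of `ℓ`, since rounding `n` down to such a
multiple lowers the frequency of mismatches by at most `ℓ / n`.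
-/

section Count

variable (p : ℕ → Prop) [DecidablePred p]

lemma count_eq_card_filter_fin (n : ℕ) :
    Nat.count p n = (Finset.univ.filter fun i : Fin n => p i).card := by
  rw [Nat.count_eq_card_filter_range, Finset.card_filter, Finset.card_filter,
    Fin.sum_univ_eq_sum_range fun i => if p i then 1 else 0]

lemma count_mul_eq_sum_count (ℓ N : ℕ) :
    Nat.count p (ℓ * N) = ∑ k ∈ Finset.range N, Nat.count (fun i => p (ℓ * k + i)) ℓ := by
  induction N with
  | zero => simp
  | succ N ih => rw [mul_add_one, Nat.count_add, ih, Finset.sum_range_succ]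

end Count

section InitialFrequency

variable (p : ℕ → Prop) [DecidablePred p]

/-- The proportion of the naturals below `n` that satisfy `p`, whose limsup is the upper density of
`{k | p k}`. The junk value at `n = 0` is `0`. -/
noncomputable def initialFrequency (n : ℕ) : ℝ := Nat.count p n / n

lemma upperDensity_eq_limsup_initialFrequency :
    upperDensity {k | p k} = limsup (initialFrequency p) atTop := by
  simp only [upperDensity, Set.indicator_apply, Set.mem_ofPred_eq, Finset.sum_boole,
    ← Nat.count_eq_card_filter_range]
  rfl

lemma initialFrequency_nonneg (n : ℕ) : 0 ≤ initialFrequency p n := by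
  unfold initialFrequency
  positivity

lemma initialFrequency_le_one (n : ℕ) : initialFrequency p n ≤ 1 :=
  div_le_one_of_le₀ (mod_cast Nat.count_le p) n.cast_nonneg

lemma isBoundedUnder_le_initialFrequency_comp {ι : Type*} (l : Filter ι) (φ : ι → ℕ) :
    l.IsBoundedUnder (· ≤ ·) (initialFrequency p ∘ φ) :=
  isBoundedUnder_of ⟨1, fun i => initialFrequency_le_one p (φ i)⟩

lemma isBoundedUnder_ge_initialFrequency_comp {ι : Type*} (l : Filter ι) (φ : ι → ℕ) :
    l.IsBoundedUnder (· ≥ ·) (initialFrequency p ∘ φ) :=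
  isBoundedUnder_of ⟨0, fun i => initialFrequency_nonneg p (φ i)⟩

lemma count_div_le_initialFrequency {k n : ℕ} (hkn : k ≤ n) :
    (Nat.count p k : ℝ) / n ≤ initialFrequency p k := by
  rcases k.eq_zero_or_pos with rfl | hk
  · simp [initialFrequency]
  · unfold initialFrequency
    gcongr

lemma initialFrequency_le_add_div {ℓ : ℕ} (hℓ : 0 < ℓ) (n : ℕ) :
    initialFrequency p n ≤ initialFrequency p (ℓ * (n / ℓ)) + ℓ / n := by
  have hcount : Nat.count p n ≤ Nat.count p (ℓ * (n / ℓ)) + ℓ := by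
    conv_lhs => rw [← Nat.div_add_mod n ℓ, Nat.count_add]
    gcongr
    exact (Nat.count_le _).trans (Nat.mod_lt n hℓ).le
  calc initialFrequency p n
      ≤ (Nat.count p (ℓ * (n / ℓ)) + ℓ) / n := by
        unfold initialFrequency
        gcongr
        exact_mod_cast hcount
    _ = Nat.count p (ℓ * (n / ℓ)) / n + ℓ / n := add_div _ _ _
    _ ≤ initialFrequency p (ℓ * (n / ℓ)) + ℓ / n := by
        gcongr
        exact count_div_le_initialFrequency p (Nat.mul_div_le n ℓ)

lemma limsup_initialFrequency_comp_le {φ : ℕ → ℕ} (hφ : Tendsto φ atTop atTop) :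
    limsup (initialFrequency p ∘ φ) atTop ≤ limsup (initialFrequency p) atTop :=
  hφ.limsup_comp_le_limsup (isBoundedUnder_ge_initialFrequency_comp p atTop φ).isCoboundedUnder_le
    (isBoundedUnder_le_initialFrequency_comp p atTop id)

lemma limsup_initialFrequency_comp_mul {ℓ : ℕ} (hℓ : 0 < ℓ) :
    limsup (initialFrequency p ∘ (ℓ * ·)) atTop = limsup (initialFrequency p) atTop := by
  have hmul : Tendsto (ℓ * ·) atTop atTop := tendsto_id.const_mul_atTop' hℓ
  have hdiv : Tendsto (· / ℓ) atTop atTop := Nat.tendsto_div_const_atTop hℓ.ne'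
  have herr : Tendsto (fun n : ℕ => (ℓ : ℝ) / n) atTop (𝓝 0) :=
    tendsto_const_div_atTop_nhds_zero_nat (ℓ : ℝ)
  refine (limsup_initialFrequency_comp_le p hmul).antisymm ?_
  calc limsup (initialFrequency p) atTop
      ≤ limsup (initialFrequency p ∘ (fun n => ℓ * (n / ℓ)) + fun n : ℕ => (ℓ : ℝ) / n) atTop :=
        limsup_le_limsup (.of_forall (initialFrequency_le_add_div p hℓ))
          (isBoundedUnder_ge_initialFrequency_comp p atTop id).isCoboundedUnder_le
          (isBoundedUnder_le_add (isBoundedUnder_le_initialFrequency_comp p _ _)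
            herr.isBoundedUnder_le)
    _ ≤ limsup (initialFrequency p ∘ fun n => ℓ * (n / ℓ)) atTop
          + limsup (fun n : ℕ => (ℓ : ℝ) / n) atTop :=
        limsup_add_le (isBoundedUnder_ge_initialFrequency_comp p _ _)
          (isBoundedUnder_le_initialFrequency_comp p _ _) herr.isCoboundedUnder_le
          herr.isBoundedUnder_le
    _ = limsup ((initialFrequency p ∘ (ℓ * ·)) ∘ (· / ℓ)) atTop := by
        rw [herr.limsup_eq, add_zero]
        rfl
    _ ≤ limsup (initialFrequency p ∘ (ℓ * ·)) atTop :=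
        hdiv.limsup_comp_le_limsup
          (isBoundedUnder_ge_initialFrequency_comp p atTop fun n => ℓ * (n / ℓ)).isCoboundedUnder_le
          (isBoundedUnder_le_initialFrequency_comp p atTop _)

lemma const_mul_limsup_initialFrequency {c : ℝ} (hc : 0 ≤ c) :
    c * limsup (initialFrequency p) atTop = limsup (fun n => c * initialFrequency p n) atTop :=
  (monotone_mul_left_of_nonneg hc).map_limsup_of_continuousAt _
    (continuous_const_mul c).continuousAt (isBoundedUnder_le_initialFrequency_comp p atTop id)
    (isBoundedUnder_ge_initialFrequency_comp p atTop id).isCoboundedUnder_le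

lemma isBoundedUnder_le_const_mul_initialFrequency {c : ℝ} (hc : 0 ≤ c) :
    atTop.IsBoundedUnder (· ≤ ·) fun n => c * initialFrequency p n :=
  isBoundedUnder_of ⟨c, fun n => mul_le_of_le_one_right hc (initialFrequency_le_one p n)⟩

lemma isCoboundedUnder_le_const_mul_initialFrequency {c : ℝ} (hc : 0 ≤ c) :
    atTop.IsCoboundedUnder (· ≤ ·) fun n => c * initialFrequency p n :=
  (isBoundedUnder_of ⟨0, fun n => mul_nonneg hc (initialFrequency_nonneg p n)⟩ :
    atTop.IsBoundedUnder (· ≥ ·) _).isCoboundedUnder_le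

end InitialFrequency

section Substitution

variable {A : Type*} {ℓ : ℕ}

section CoincidenceCount

variable (θ : A → Fin ℓ → A)

lemma hammingDist_add_coincCount [DecidableEq A] (a b : A) :
    hammingDist (θ a) (θ b) + coincCount θ a b = ℓ := by
  classical
  rw [hammingDist, coincCount, add_comm]
  convert Finset.card_filter_add_card_filter_not (s := Finset.univ) fun j => θ a j = θ b j
  simp

lemma coincCount_le (a b : A) : coincCount θ a b ≤ ℓ := by
  classical
  exact le_of_add_le_right (hammingDist_add_coincCount θ a b).le

lemma cMin_le_coincCount {a b : A} (hab : a ≠ b) : cMin θ ≤ coincCount θ a b :=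
  Nat.sInf_le ⟨a, b, hab, rfl⟩

lemma coincCount_le_cMax {a b : A} (hab : a ≠ b) : coincCount θ a b ≤ cMax θ :=
  le_csSup ⟨ℓ, by rintro _ ⟨a, b, -, rfl⟩; exact coincCount_le θ a b⟩ ⟨a, b, hab, rfl⟩

lemma cMin_le_length [Nontrivial A] : cMin θ ≤ ℓ :=
  let ⟨a, b, hab⟩ := exists_pair_ne A
  (cMin_le_coincCount θ hab).trans (coincCount_le θ a b)

lemma cMax_le_length : cMax θ ≤ ℓ :=
  csSup_le' (by rintro _ ⟨a, b, -, rfl⟩; exact coincCount_le θ a b)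

lemma sub_cMax_le_hammingDist [DecidableEq A] {a b : A} (hab : a ≠ b) :
    ℓ - cMax θ ≤ hammingDist (θ a) (θ b) := by
  have := hammingDist_add_coincCount θ a b
  have := coincCount_le_cMax θ hab
  omega

lemma hammingDist_le_sub_cMin [DecidableEq A] {a b : A} (hab : a ≠ b) :
    hammingDist (θ a) (θ b) ≤ ℓ - cMin θ := by
  have := hammingDist_add_coincCount θ a b
  have := cMin_le_coincCount θ hab
  omega

end CoincidenceCount

lemma besD1_eq_limsup_initialFrequency [DecidableEq A] (x y : ℤ → A) :
    besD1 x y = limsup (initialFrequency fun k : ℕ => x k ≠ y k) atTop :=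
  upperDensity_eq_limsup_initialFrequency _

variable (hℓ : 0 < ℓ) (θ : A → Fin ℓ → A)

lemma substApply_mul_add (x : ℤ → A) (k : ℤ) (i : Fin ℓ) :
    substApply hℓ θ x (ℓ * k + i) = θ (x k) i := by
  have hi : ((i : ℕ) : ℤ) < ℓ := mod_cast i.isLt
  have hdiv : (ℓ * k + i : ℤ) / ℓ = k := by
    rw [Int.mul_add_ediv_left _ _ (by omega), Int.ediv_eq_zero_of_lt (by positivity) hi, add_zero]
  have hmod : (ℓ * k + i : ℤ) % ℓ = i := by
    rw [Int.mul_add_emod_self_left, Int.emod_eq_of_lt (by positivity) hi]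
  simp only [substApply, hdiv, hmod, Int.toNat_natCast]

variable [DecidableEq A] (x y : ℤ → A)

lemma besD1_substApply_eq_limsup :
    besD1 (substApply hℓ θ x) (substApply hℓ θ y) =
      limsup (initialFrequency (fun j : ℕ => substApply hℓ θ x j ≠ substApply hℓ θ y j) ∘ (ℓ * ·))
        atTop := by
  rw [besD1_eq_limsup_initialFrequency, limsup_initialFrequency_comp_mul _ hℓ]

lemma count_substApply_ne_block (k : ℕ) :
    Nat.count (fun i => substApply hℓ θ x (ℓ * k + i : ℕ) ≠ substApply hℓ θ y (ℓ * k + i : ℕ)) ℓ =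
      hammingDist (θ (x k)) (θ (y k)) := by
  rw [count_eq_card_filter_fin, hammingDist]
  simp only [Nat.cast_add, Nat.cast_mul, substApply_mul_add]

lemma count_substApply_ne (N : ℕ) :
    Nat.count (fun j : ℕ => substApply hℓ θ x j ≠ substApply hℓ θ y j) (ℓ * N) =
      ∑ k ∈ Finset.range N with x (k : ℕ) ≠ y (k : ℕ), hammingDist (θ (x k)) (θ (y k)) := by
  rw [count_mul_eq_sum_count, Finset.sum_filter_of_ne]
  · exact Finset.sum_congr rfl fun k _ => count_substApply_ne_block hℓ θ x y k
  · intro k _ hne hxy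
    exact hne (by rw [hxy, hammingDist_self])

variable {θ}

lemma mul_initialFrequency_ne_le_substApply {d : ℕ}
    (hd : ∀ a b, a ≠ b → d ≤ hammingDist (θ a) (θ b)) (N : ℕ) :
    (d : ℝ) / ℓ * initialFrequency (fun k : ℕ => x k ≠ y k) N ≤
      initialFrequency (fun j : ℕ => substApply hℓ θ x j ≠ substApply hℓ θ y j) (ℓ * N) := by
  have hcount : d * Nat.count (fun k : ℕ => x k ≠ y k) N ≤
      Nat.count (fun j : ℕ => substApply hℓ θ x j ≠ substApply hℓ θ y j) (ℓ * N) := by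
    rw [count_substApply_ne, Nat.count_eq_card_filter_range, mul_comm, ← smul_eq_mul]
    exact Finset.card_nsmul_le_sum _ _ _ fun k hk => hd _ _ (Finset.mem_filter.1 hk).2
  rw [initialFrequency, initialFrequency, div_mul_div_comm, Nat.cast_mul]
  gcongr
  exact_mod_cast hcount

lemma initialFrequency_substApply_le_mul {d : ℕ}
    (hd : ∀ a b, a ≠ b → hammingDist (θ a) (θ b) ≤ d) (N : ℕ) :
    initialFrequency (fun j : ℕ => substApply hℓ θ x j ≠ substApply hℓ θ y j) (ℓ * N) ≤
      (d : ℝ) / ℓ * initialFrequency (fun k : ℕ => x k ≠ y k) N := by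
  have hcount : Nat.count (fun j : ℕ => substApply hℓ θ x j ≠ substApply hℓ θ y j) (ℓ * N) ≤
      d * Nat.count (fun k : ℕ => x k ≠ y k) N := by
    rw [count_substApply_ne, Nat.count_eq_card_filter_range, mul_comm d, ← smul_eq_mul]
    exact Finset.sum_le_card_nsmul _ _ _ fun k hk => hd _ _ (Finset.mem_filter.1 hk).2
  rw [initialFrequency, initialFrequency, div_mul_div_comm, Nat.cast_mul]
  gcongr
  exact_mod_cast hcount

theorem mul_besD1_le_besD1_substApply {d : ℕ}
    (hd : ∀ a b, a ≠ b → d ≤ hammingDist (θ a) (θ b)) :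
    (d : ℝ) / ℓ * besD1 x y ≤ besD1 (substApply hℓ θ x) (substApply hℓ θ y) := by
  have hr : (0 : ℝ) ≤ d / ℓ := by positivity
  rw [besD1_eq_limsup_initialFrequency x y, const_mul_limsup_initialFrequency _ hr,
    besD1_substApply_eq_limsup]
  exact limsup_le_limsup (.of_forall (mul_initialFrequency_ne_le_substApply hℓ x y hd))
    (isCoboundedUnder_le_const_mul_initialFrequency _ hr)
    (isBoundedUnder_le_initialFrequency_comp _ _ _)

theorem besD1_substApply_le_mul_besD1 {d : ℕ}
    (hd : ∀ a b, a ≠ b → hammingDist (θ a) (θ b) ≤ d) :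
    besD1 (substApply hℓ θ x) (substApply hℓ θ y) ≤ (d : ℝ) / ℓ * besD1 x y := by
  have hr : (0 : ℝ) ≤ d / ℓ := by positivity
  rw [besD1_eq_limsup_initialFrequency x y, const_mul_limsup_initialFrequency _ hr,
    besD1_substApply_eq_limsup]
  exact limsup_le_limsup (.of_forall (initialFrequency_substApply_le_mul hℓ x y hd))
    (isBoundedUnder_ge_initialFrequency_comp _ _ _).isCoboundedUnder_le
    (isBoundedUnder_le_const_mul_initialFrequency _ hr)

end Substitution

theorem substitution_besicovitch_contraction_bounds_general
    {A : Type*} [Nontrivial A] {ℓ : ℕ} (hℓ : 0 < ℓ) (θ : A → Fin ℓ → A) (x y : ℤ → A) :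
    ((ℓ : ℝ) - cMax θ) / ℓ * besD1 x y ≤
        besD1 (substApply hℓ θ x) (substApply hℓ θ y) ∧
      besD1 (substApply hℓ θ x) (substApply hℓ θ y) ≤
        ((ℓ : ℝ) - cMin θ) / ℓ * besD1 x y := by
  classical
  rw [← Nat.cast_sub (cMax_le_length θ), ← Nat.cast_sub (cMin_le_length θ)]
  exact ⟨mul_besD1_le_besD1_substApply hℓ x y fun _ _ => sub_cMax_le_hammingDist θ,
    besD1_substApply_le_mul_besD1 hℓ x y fun _ _ => hammingDist_le_sub_cMin θ⟩

/-- For a constant length substitution `θ` of length `ℓ` over a finite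
alphabet with at least two letters, and for all `x,y ∈ A^ℤ`,
`((ℓ - C(θ))/ℓ)·D_1(x,y) ≤ D_1(θ(x),θ(y)) ≤ ((ℓ - c(θ))/ℓ)·D_1(x,y)`. -/
theorem substitution_besicovitch_contraction_bounds
    {A : Type} [Fintype A] (hA : ∃ a b : A, a ≠ b)
    {ℓ : ℕ} (hℓ : 0 < ℓ) (θ : A → Fin ℓ → A) :
    ∀ x y : ℤ → A,
      ((ℓ : ℝ) - cMax θ) / ℓ * besD1 x y ≤
        besD1 (substApply hℓ θ x) (substApply hℓ θ y) ∧
      besD1 (substApply hℓ θ x) (substApply hℓ θ y) ≤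
        ((ℓ : ℝ) - cMin θ) / ℓ * besD1 x y :=
  have : Nontrivial A := ⟨hA⟩
  substitution_besicovitch_contraction_bounds_general hℓ θ
end
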